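/- Let q ∈ ℂ with 0 < |q| < 1, let A : ℤ → ℂ be any sequence, and let x ∈ ℂ with x ≠ q^{-m} for every m ∈ ℕ. Assume the sequence n ↦ A_n / (q;q)_n is absolutely summable over ℕ and the family (i,k,j) ↦ x^k q^{ik} (-1)^k q^{k(k-1)/2} A_{i-k-j} x^j / ((q;q)_i (q;q)_k (x;q)_k (q;q)_j) indexed by ℕ×ℕ×ℕ is absolutely summable. Then ∑_{n≥0} A_n / (q;q)_n = (x;q)_∞ · ∑_{i,k≥0} [x^k q^{ik} τ(k) / ((q;q)_i (q;q)_k (x;q)_k)] · ∑_{j≥0} A_{i-k-j} x^j / (q;q)_j. -/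

import Mathlib

/-- The finite q-shifted factorial `(a;q)_n = ∏_{k=0}^{n-1} (1 - a q^k)`. -/
noncomputable def qPoch (a q : ℂ) (n : ℕ) : ℂ := ∏ k ∈ Finset.range n, (1 - a * q ^ k)

/-- The infinite q-shifted factorial `(a;q)_∞ = ∏_{k=0}^{∞} (1 - a q^k)`. -/
noncomputable def qPochInf (a q : ℂ) : ℂ := ∏' k : ℕ, (1 - a * q ^ k)

/-- `τ(n) = (-1)^n q^{n(n-1)/2}` for `n : ℕ`. -/
noncomputable def qTau (q : ℂ) (n : ℕ) : ℂ := (-1 : ℂ) ^ n * q ^ (n * (n - 1) / 2)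

/-!
Both sides are linear in `A`, so the theorem amounts to one identity for each `N`, the coefficient
of `A N`: with `1 / (q;q)_n := 0` for `n < 0`,
`∑_{k,j} τ(k) (x q^{N+k+j})^k x^j (x q^k;q)_∞ / ((q;q)_k (q;q)_j (q;q)_{N+k+j}) = 1 / (q;q)_N`.
Expand `(x q^k;q)_∞` by Euler's theorem into a sum over `l` and collect the coefficient of `x^m`,
`m = k + j + l`. The sum over `k + j = r` is evaluated by the finite `q`-binomial theorem, and the
remaining sum over `r + l = m` telescopes to zero unless `m = 0`. The rearrangements need `‖x‖ < 1`;
when `‖x‖ ≥ 1`, summability of the triple family forces `A = 0`.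
-/

open Filter Finset Topology

section General

lemma hasSum_sum_of_mem_iff {α β γ : Type*} [AddCommMonoid α] [TopologicalSpace α]
    [ContinuousAdd α] [RegularSpace α] {f : β → α} {a : α} {g : β → γ} {s : γ → Finset β}
    (hf : HasSum f a) (hs : ∀ b c, b ∈ s c ↔ g b = c) :
    HasSum (fun c => ∑ b ∈ s c, f b) a := by
  refine ((Equiv.sigmaFiberEquiv g).hasSum_iff.mpr hf).sigma fun c => ?_
  exact (Equiv.subtypeEquivRight fun b => hs b c).hasSum_iff.mp ((s c).hasSum f)

lemma summable_of_ratio_tendsto {R : Type*} [NormedRing R] [CompleteSpace R] {f g : ℕ → R}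
    {L : R} (hfg : ∀ n, f (n + 1) = g n * f n) (hg : Tendsto g atTop (𝓝 L))
    (hL : ‖L‖ < 1) : Summable f := by
  obtain ⟨r, hLr, hr⟩ := exists_between hL
  refine summable_of_ratio_norm_eventually_le hr ?_
  filter_upwards [hg.norm.eventually_le_const hLr] with n hn
  rw [hfg]
  exact (norm_mul_le _ _).trans (by gcongr)

lemma tendsto_inv_one_sub_pow_succ {𝕜 : Type*} [NormedField 𝕜] {q : 𝕜} (hq : ‖q‖ < 1) :
    Tendsto (fun n : ℕ => (1 - q ^ (n + 1))⁻¹) atTop (𝓝 1) := by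
  have hpow := (tendsto_pow_atTop_nhds_zero_of_norm_lt_one hq).comp (tendsto_add_atTop_nat 1)
  simpa using (hpow.const_sub 1).inv₀ (by simp)

end General

section Algebra

variable {q : ℂ}

lemma qTau_succ (q : ℂ) (n : ℕ) : qTau q (n + 1) = -q ^ n * qTau q n := by
  rw [qTau, qTau, Nat.triangle_succ, pow_add, pow_succ]
  ring

@[simp] lemma qPoch_zero (a q : ℂ) : qPoch a q 0 = 1 := prod_range_zero _

lemma qPoch_succ (a q : ℂ) (n : ℕ) : qPoch a q (n + 1) = qPoch a q n * (1 - a * q ^ n) :=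
  prod_range_succ _ _

lemma qPoch_succ' (a q : ℂ) (n : ℕ) : qPoch a q (n + 1) = (1 - a) * qPoch (a * q) q n := by
  rw [qPoch, prod_range_succ', mul_comm, pow_zero, mul_one]
  simp only [qPoch, pow_succ', mul_assoc]

lemma one_sub_pow_succ_ne_zero (hq : ∀ n, qPoch q q n ≠ 0) (n : ℕ) : 1 - q ^ (n + 1) ≠ 0 := by
  have h := hq (n + 1)
  rw [qPoch_succ, ← pow_succ'] at h
  exact right_ne_zero_of_mul h

lemma inv_qPoch_succ_mul (hq : ∀ n, qPoch q q n ≠ 0) (n : ℕ) :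
    (qPoch q q (n + 1))⁻¹ * (1 - q ^ (n + 1)) = (qPoch q q n)⁻¹ := by
  rw [qPoch_succ, ← pow_succ', mul_inv, inv_mul_cancel_right₀ (one_sub_pow_succ_ne_zero hq n)]

/-- The coefficient of `z ^ n` in Euler's expansion of `(z;q)_∞`. -/
noncomputable def eulerCoeff (q : ℂ) (n : ℕ) : ℂ := qTau q n / qPoch q q n

@[simp] lemma eulerCoeff_zero (q : ℂ) : eulerCoeff q 0 = 1 := by simp [eulerCoeff, qTau]

lemma eulerCoeff_succ_mul (hq : ∀ n, qPoch q q n ≠ 0) (n : ℕ) :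
    eulerCoeff q (n + 1) * (1 - q ^ (n + 1)) = -q ^ n * eulerCoeff q n := by
  rw [eulerCoeff, eulerCoeff, div_eq_mul_inv, mul_assoc, inv_qPoch_succ_mul hq, qTau_succ]
  ring

theorem finite_qBinomial (hq : ∀ n, qPoch q q n ≠ 0) (y : ℂ) (r : ℕ) :
    ∑ p ∈ antidiagonal r, eulerCoeff q p.1 * y ^ p.1 * (qPoch q q p.2)⁻¹ =
      qPoch y q r * (qPoch q q r)⁻¹ := by
  induction r generalizing y with
  | zero => simp
  | succ r ih =>
    -- `1 - q ^ (k + j) = (1 - q ^ k) + q ^ k * (1 - q ^ j)`, and each part lowers one index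
    have split_sum : (1 - q ^ (r + 1)) *
          ∑ p ∈ antidiagonal (r + 1), eulerCoeff q p.1 * y ^ p.1 * (qPoch q q p.2)⁻¹ =
        ∑ p ∈ antidiagonal (r + 1),
          eulerCoeff q p.1 * (1 - q ^ p.1) * y ^ p.1 * (qPoch q q p.2)⁻¹ +
        ∑ p ∈ antidiagonal (r + 1),
          eulerCoeff q p.1 * (y * q) ^ p.1 * ((qPoch q q p.2)⁻¹ * (1 - q ^ p.2)) := by
      rw [mul_sum, ← sum_add_distrib]
      refine sum_congr rfl fun p hp => ?_
      rw [← mem_antidiagonal.mp hp, pow_add, mul_pow]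
      ring
    have lower_left : ∑ p ∈ antidiagonal (r + 1),
          eulerCoeff q p.1 * (1 - q ^ p.1) * y ^ p.1 * (qPoch q q p.2)⁻¹ =
        -y * (qPoch (y * q) q r * (qPoch q q r)⁻¹) := by
      rw [Nat.sum_antidiagonal_succ, ← ih (y * q), mul_sum]
      simp only [pow_zero, sub_self, mul_zero, zero_mul, zero_add, eulerCoeff_succ_mul hq]
      refine sum_congr rfl fun p _ => ?_
      rw [mul_pow]
      ring
    have lower_right : ∑ p ∈ antidiagonal (r + 1),
          eulerCoeff q p.1 * (y * q) ^ p.1 * ((qPoch q q p.2)⁻¹ * (1 - q ^ p.2)) =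
        qPoch (y * q) q r * (qPoch q q r)⁻¹ := by
      rw [Nat.sum_antidiagonal_succ', ← ih (y * q)]
      simp only [pow_zero, sub_self, mul_zero, zero_add, inv_qPoch_succ_mul hq]
    apply mul_left_cancel₀ (one_sub_pow_succ_ne_zero hq r)
    rw [split_sum, lower_left, lower_right, qPoch_succ', ← inv_qPoch_succ_mul hq r]
    ring

section Orthogonality

variable {a : ℂ} {c : ℕ → ℂ}

lemma one_sub_pow_mul_sum_range_eulerCoeff_mul_qPoch (hq : ∀ n, qPoch q q n ≠ 0)
    (hc : ∀ r, c r = c (r + 1) * (1 - a * q ^ (r + 1))) (m R : ℕ) {l : ℕ} (hl : R + l = m) :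
    (1 - q ^ m) * ∑ r ∈ range (R + 1),
        eulerCoeff q (m - r) * (qPoch (a * q ^ m) q r * (qPoch q q r)⁻¹) * c r =
      eulerCoeff q l * (1 - q ^ l) * (qPoch (a * q ^ m * q) q R * (qPoch q q R)⁻¹) * c R := by
  induction R generalizing l with
  | zero =>
    obtain rfl : l = m := by omega
    simp only [zero_add, range_one, sum_singleton, tsub_zero, qPoch_zero, inv_one, mul_one]
    ring
  | succ R ih =>
    have hsub : m - (R + 1) = l := by omega
    rw [sum_range_succ, mul_add, ih (l := l + 1) (by omega), hsub, eulerCoeff_succ_mul hq, hc R,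
      qPoch_succ' (a * q ^ m), qPoch_succ (a * q ^ m * q), ← inv_qPoch_succ_mul hq R, ← hl]
    ring

lemma sum_antidiagonal_eulerCoeff_mul_qPoch (hq : ∀ n, qPoch q q n ≠ 0)
    (hc : ∀ r, c r = c (r + 1) * (1 - a * q ^ (r + 1))) (m : ℕ) :
    ∑ p ∈ antidiagonal m,
        eulerCoeff q p.2 * (qPoch (a * q ^ m) q p.1 * (qPoch q q p.1)⁻¹) * c p.1 =
      if m = 0 then c 0 else 0 := by
  rcases m with _ | m
  · simp
  · have htele := one_sub_pow_mul_sum_range_eulerCoeff_mul_qPoch hq hc (m + 1) (m + 1) (add_zero _)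
    rw [pow_zero, sub_self, mul_zero, zero_mul, zero_mul] at htele
    rw [if_neg m.succ_ne_zero, Nat.sum_antidiagonal_eq_sum_range_succ_mk]
    exact (mul_eq_zero.mp htele).resolve_left (one_sub_pow_succ_ne_zero hq m)

end Orthogonality

/-- The reciprocal `1 / (q;q)_n` for an integer `n`, set to zero when `n < 0`; with this value the
recurrence `invQPoch_add_one_mul` holds on all of `ℤ`. -/
noncomputable def invQPoch (q : ℂ) : ℤ → ℂ
  | .ofNat n => (qPoch q q n)⁻¹
  | .negSucc _ => 0

@[simp] lemma invQPoch_natCast (q : ℂ) (n : ℕ) : invQPoch q n = (qPoch q q n)⁻¹ := rfl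

lemma invQPoch_of_neg (q : ℂ) {n : ℤ} (hn : n < 0) : invQPoch q n = 0 := by
  obtain ⟨m, rfl⟩ := Int.eq_negSucc_of_lt_zero hn
  rfl

lemma invQPoch_add_one_mul (hq : ∀ n, qPoch q q n ≠ 0) (n : ℤ) :
    invQPoch q (n + 1) * (1 - q ^ (n + 1)) = invQPoch q n := by
  rcases lt_trichotomy n (-1) with hn | rfl | hn
  · rw [invQPoch_of_neg q (by omega : n + 1 < 0), invQPoch_of_neg q (by omega : n < 0), zero_mul]
  · simp [invQPoch_of_neg]
  · lift n to ℕ using by omega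
    exact_mod_cast inv_qPoch_succ_mul hq n

lemma invQPoch_add_natCast (hq0 : q ≠ 0) (hq : ∀ n, qPoch q q n ≠ 0) (N : ℤ) (r : ℕ) :
    invQPoch q (N + r) = invQPoch q (N + (r + 1 : ℕ)) * (1 - q ^ N * q ^ (r + 1)) := by
  rw [← invQPoch_add_one_mul hq, ← zpow_natCast q (r + 1), ← zpow_add₀ hq0, Nat.cast_succ,
    add_assoc]

end Algebra

section Analysis

variable {q : ℂ}

lemma qPoch_ne_zero {a : ℂ} (hq : ‖q‖ < 1) (ha : ‖a‖ < 1) (n : ℕ) : qPoch a q n ≠ 0 := by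
  refine prod_ne_zero_iff.mpr fun k _ => (isUnit_one_sub_of_norm_lt_one ?_).ne_zero
  rw [norm_mul, norm_pow]
  exact mul_lt_one_of_nonneg_of_lt_one_left (norm_nonneg _) ha
    (pow_le_one₀ (norm_nonneg _) hq.le)

lemma summable_norm_neg_mul_pow (hq : ‖q‖ < 1) (a : ℂ) :
    Summable fun k : ℕ => ‖-(a * q ^ k)‖ := by
  simpa only [norm_neg] using ((summable_geometric_of_norm_lt_one hq).mul_left a).norm

lemma multipliable_one_sub_mul_pow (hq : ‖q‖ < 1) (a : ℂ) :
    Multipliable fun k : ℕ => 1 - a * q ^ k := by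
  simpa only [sub_eq_add_neg] using
    multipliable_one_add_of_summable (summable_norm_neg_mul_pow hq a)

lemma tendsto_qPoch (hq : ‖q‖ < 1) (a : ℂ) :
    Tendsto (qPoch a q) atTop (𝓝 (qPochInf a q)) :=
  (multipliable_one_sub_mul_pow hq a).tendsto_prod_tprod_nat

lemma qPoch_mul_qPochInf (hq : ‖q‖ < 1) (a : ℂ) (k : ℕ) :
    qPoch a q k * qPochInf (a * q ^ k) q = qPochInf a q := by
  have key : (fun n : ℕ => 1 - a * q ^ k * q ^ n) = fun n : ℕ => 1 - a * q ^ (n + k) := by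
    funext n
    ring
  have hmul := multipliable_one_sub_mul_pow hq (a * q ^ k)
  rw [key] at hmul
  rw [qPochInf, qPochInf, qPoch, key]
  exact hmul.prod_mul_tprod_nat_mul' (f := fun n : ℕ => 1 - a * q ^ n)

lemma qPochInf_ne_zero {a : ℂ} (hq : ‖q‖ < 1) (ha : ‖a‖ < 1) : qPochInf a q ≠ 0 := by
  have hfactor (k : ℕ) : 1 + -(a * q ^ k) ≠ 0 := by
    have h := qPoch_ne_zero hq ha (k + 1)
    rw [qPoch_succ] at h
    simpa only [← sub_eq_add_neg] using right_ne_zero_of_mul h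
  simpa only [qPochInf, sub_eq_add_neg] using
    tprod_one_add_ne_zero_of_summable hfactor (summable_norm_neg_mul_pow hq a)

lemma exists_norm_qPoch_le (hq : ‖q‖ < 1) (a : ℂ) : ∃ C, ∀ n, ‖qPoch a q n‖ ≤ C :=
  let ⟨C, hC⟩ := (Metric.isBounded_range_of_tendsto _ (tendsto_qPoch hq a)).exists_norm_le
  ⟨C, fun n => hC _ ⟨n, rfl⟩⟩

lemma exists_norm_invQPoch_le (hq : ‖q‖ < 1) : ∃ C, ∀ n, ‖invQPoch q n‖ ≤ C := by
  have hlim := (tendsto_qPoch hq q).inv₀ (qPochInf_ne_zero hq hq)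
  obtain ⟨C, hC⟩ := (Metric.isBounded_range_of_tendsto _ hlim).exists_norm_le
  refine ⟨C, fun n => ?_⟩
  rcases lt_or_ge n 0 with hn | hn
  · rw [invQPoch_of_neg q hn, norm_zero]
    exact (norm_nonneg _).trans (hC _ ⟨0, rfl⟩)
  · lift n to ℕ using hn
    exact hC _ ⟨n, rfl⟩

lemma summable_eulerCoeff_mul_pow (hq : ‖q‖ < 1) (z : ℂ) :
    Summable fun n => eulerCoeff q n * z ^ n := by
  have hratio : Tendsto (fun n : ℕ => -q ^ n * z * (1 - q ^ (n + 1))⁻¹) atTop (𝓝 0) := by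
    simpa using ((tendsto_pow_atTop_nhds_zero_of_norm_lt_one hq).neg.mul_const z).mul
      (tendsto_inv_one_sub_pow_succ hq)
  refine summable_of_ratio_tendsto (fun n => ?_) hratio (by simp)
  have hne := one_sub_pow_succ_ne_zero (qPoch_ne_zero hq hq) n
  rw [eq_div_of_mul_eq hne (eulerCoeff_succ_mul (qPoch_ne_zero hq hq) n)]
  ring

lemma summable_pow_div_qPoch (hq : ‖q‖ < 1) {x : ℂ} (hx : ‖x‖ < 1) :
    Summable fun n => x ^ n / qPoch q q n := by
  have hratio : Tendsto (fun n : ℕ => x * (1 - q ^ (n + 1))⁻¹) atTop (𝓝 x) := by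
    simpa using (tendsto_inv_one_sub_pow_succ hq).const_mul x
  refine summable_of_ratio_tendsto (fun n => ?_) hratio hx
  rw [qPoch_succ, ← pow_succ', pow_succ, div_eq_mul_inv, mul_inv]
  ring

lemma tsum_eulerCoeff_mul_invQPoch_sub (hq : ‖q‖ < 1) (z : ℂ) (r : ℕ) :
    ∑' k : ℕ, eulerCoeff q k * z ^ k * (qPoch q q r * invQPoch q (r - k)) = qPoch z q r := by
  have hvanish : ∀ k ∉ range (r + 1),
      eulerCoeff q k * z ^ k * (qPoch q q r * invQPoch q (r - k)) = 0 := by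
    intro k hk
    rw [mem_range] at hk
    rw [invQPoch_of_neg q (by omega), mul_zero, mul_zero]
  rw [tsum_eq_sum hvanish,
    ← mul_inv_cancel_right₀ (qPoch_ne_zero hq hq r) (qPoch z q r), mul_right_comm,
    ← finite_qBinomial (qPoch_ne_zero hq hq), Nat.sum_antidiagonal_eq_sum_range_succ_mk, sum_mul]
  refine sum_congr rfl fun k hk => ?_
  rw [← Nat.cast_sub (mem_range_succ_iff.mp hk), invQPoch_natCast]
  ring

theorem hasSum_eulerCoeff_mul_pow (hq : ‖q‖ < 1) (z : ℂ) :
    HasSum (fun k => eulerCoeff q k * z ^ k) (qPochInf z q) := by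
  obtain ⟨C, hC⟩ := exists_norm_qPoch_le hq q
  obtain ⟨D, hD⟩ := exists_norm_invQPoch_le hq
  have hterm (k : ℕ) : Tendsto
      (fun r : ℕ => eulerCoeff q k * z ^ k * (qPoch q q r * invQPoch q (r - k))) atTop
      (𝓝 (eulerCoeff q k * z ^ k)) := by
    have hquot : Tendsto (fun r : ℕ => qPoch q q r * invQPoch q (r - k)) atTop (𝓝 1) := by
      rw [← tendsto_add_atTop_iff_nat k, ← mul_inv_cancel₀ (qPochInf_ne_zero hq hq)]
      have hlim := tendsto_qPoch hq q
      simpa using ((tendsto_add_atTop_iff_nat k).mpr hlim).mul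
        (hlim.inv₀ (qPochInf_ne_zero hq hq))
    simpa using hquot.const_mul (eulerCoeff q k * z ^ k)
  have hbound (r k : ℕ) : ‖eulerCoeff q k * z ^ k * (qPoch q q r * invQPoch q (r - k))‖ ≤
      ‖eulerCoeff q k * z ^ k‖ * (C * D) := by
    rw [norm_mul, norm_mul (qPoch q q r)]
    gcongr
    exacts [(norm_nonneg _).trans (hC 0), hC r, hD _]
  have hsum := summable_eulerCoeff_mul_pow hq z
  have hlim := tendsto_tsum_of_dominated_convergence (hsum.norm.mul_right (C * D)) hterm
    (Eventually.of_forall hbound)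
  simp only [tsum_eulerCoeff_mul_invQPoch_sub hq] at hlim
  rw [tendsto_nhds_unique (tendsto_qPoch hq z) hlim]
  exact hsum.hasSum

end Analysis

section CoefficientIdentity

/-- The summand indexed by `(k, j)` of the expansion of `c 0`, where `c` solves
`c r = c (r + 1) * (1 - a q ^ (r + 1))`. For `a = q ^ N` and `c r = 1 / (q;q)_{N + r}` these
summands add up to the coefficient of `A N` in `(x;q)_∞` times the triple series. -/
noncomputable def doubleTerm (q a x : ℂ) (c : ℕ → ℂ) (p : ℕ × ℕ) : ℂ :=
  eulerCoeff q p.1 * (a * x * q ^ (p.1 + p.2)) ^ p.1 * (x ^ p.2 / qPoch q q p.2) *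
    qPochInf (x * q ^ p.1) q * c (p.1 + p.2)

/-- The summand indexed by `((k, j), l)` obtained from `doubleTerm q a x c (k, j)` by expanding
`(x q ^ k;q)_∞` in powers of `x`. -/
noncomputable def tripleTerm (q a x : ℂ) (c : ℕ → ℂ) (p : (ℕ × ℕ) × ℕ) : ℂ :=
  eulerCoeff q p.1.1 * (a * x * q ^ (p.1.1 + p.1.2 + p.2)) ^ p.1.1 * (x ^ p.1.2 / qPoch q q p.1.2) *
    (eulerCoeff q p.2 * x ^ p.2) * c (p.1.1 + p.1.2)

variable {q a x : ℂ} {c : ℕ → ℂ}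

lemma summable_tripleTerm (hq : ‖q‖ < 1) (hx : ‖x‖ < 1) (a : ℂ) {C : ℝ} (hC : ∀ r, ‖c r‖ ≤ C) :
    Summable (tripleTerm q a x c) := by
  have hk := (summable_eulerCoeff_mul_pow hq (a * x)).norm
  have hj := (summable_pow_div_qPoch hq hx).norm
  have hl := (summable_eulerCoeff_mul_pow hq x).norm
  have hkj := hk.mul_of_nonneg hj (fun _ => norm_nonneg _) fun _ => norm_nonneg _
  have hkjl := hkj.mul_of_nonneg hl (fun _ => by positivity) fun _ => norm_nonneg _
  refine .of_norm_bounded (hkjl.mul_right C) ?_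
  rintro ⟨⟨k, j⟩, l⟩
  have hpow : ‖(q ^ (k + j + l)) ^ k‖ ≤ 1 := by
    rw [← pow_mul, norm_pow]
    exact pow_le_one₀ (norm_nonneg _) hq.le
  calc ‖tripleTerm q a x c ((k, j), l)‖
      = ‖eulerCoeff q k * (a * x) ^ k‖ * ‖(q ^ (k + j + l)) ^ k‖ * ‖x ^ j / qPoch q q j‖ *
          ‖eulerCoeff q l * x ^ l‖ * ‖c (k + j)‖ := by
        simp only [tripleTerm, mul_pow _ (q ^ _), ← mul_assoc, norm_mul]
    _ ≤ ‖eulerCoeff q k * (a * x) ^ k‖ * 1 * ‖x ^ j / qPoch q q j‖ *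
          ‖eulerCoeff q l * x ^ l‖ * C := by
        gcongr
        exact hC _
    _ = _ := by rw [mul_one]

lemma sum_antidiagonal_tripleTerm (hq : ∀ n, qPoch q q n ≠ 0) (r l : ℕ) :
    ∑ p ∈ antidiagonal r, tripleTerm q a x c (p, l) =
      x ^ (r + l) *
        (eulerCoeff q l * (qPoch (a * q ^ (r + l)) q r * (qPoch q q r)⁻¹) * c r) := by
  rw [← finite_qBinomial hq, mul_sum, sum_mul, mul_sum]
  refine sum_congr rfl fun p hp => ?_
  obtain rfl := mem_antidiagonal.mp hp
  simp only [tripleTerm]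
  ring

lemma hasSum_tripleTerm (hq : ‖q‖ < 1) (hx : ‖x‖ < 1)
    (hc : ∀ r, c r = c (r + 1) * (1 - a * q ^ (r + 1))) {C : ℝ} (hC : ∀ r, ‖c r‖ ≤ C) :
    HasSum (tripleTerm q a x c) (c 0) := by
  have hsum := (summable_tripleTerm hq hx a hC).hasSum
  have hsum_r := hasSum_sum_of_mem_iff (g := fun p => (p.1.1 + p.1.2, p.2))
    (s := fun p => antidiagonal p.1 ×ˢ {p.2}) hsum
    (by simp [Prod.ext_iff, eq_comm])
  have hsum_m := hasSum_sum_of_mem_iff (s := antidiagonal) hsum_r fun _ _ => mem_antidiagonal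
  have hcollapse (m : ℕ) : ∑ p ∈ antidiagonal m,
      ∑ b ∈ antidiagonal p.1 ×ˢ {p.2}, tripleTerm q a x c b = if m = 0 then c 0 else 0 := by
    calc _ = x ^ m * ∑ p ∈ antidiagonal m,
          eulerCoeff q p.2 * (qPoch (a * q ^ m) q p.1 * (qPoch q q p.1)⁻¹) * c p.1 := by
          rw [mul_sum]
          refine sum_congr rfl fun p hp => ?_
          rw [sum_product]
          simp only [sum_singleton]
          rw [sum_antidiagonal_tripleTerm (qPoch_ne_zero hq hq), mem_antidiagonal.mp hp]
      _ = if m = 0 then c 0 else 0 := by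
          rw [sum_antidiagonal_eulerCoeff_mul_qPoch (qPoch_ne_zero hq hq) hc]
          rcases eq_or_ne m 0 with rfl | hm
          · simp
          · simp [hm]
  simp only [hcollapse] at hsum_m
  rwa [hsum_m.unique (hasSum_ite_eq 0 (c 0))] at hsum

theorem hasSum_doubleTerm (hq : ‖q‖ < 1) (hx : ‖x‖ < 1)
    (hc : ∀ r, c r = c (r + 1) * (1 - a * q ^ (r + 1))) {C : ℝ} (hC : ∀ r, ‖c r‖ ≤ C) :
    HasSum (doubleTerm q a x c) (c 0) := by
  refine (hasSum_tripleTerm hq hx hc hC).prod_fiberwise ?_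
  rintro ⟨k, j⟩
  have heuler := hasSum_eulerCoeff_mul_pow hq (x * q ^ k)
  refine ((heuler.mul_left (eulerCoeff q k * (a * x * q ^ (k + j)) ^ k *
    (x ^ j / qPoch q q j))).mul_right (c (k + j))).congr_fun fun l => ?_
  simp only [tripleTerm]
  ring

end CoefficientIdentity

section Expansion

/-- The summand of the triple series in the theorem, indexed by `(i, k, j)`. -/
noncomputable def seriesTerm (q x : ℂ) (A : ℤ → ℂ) (p : ℕ × ℕ × ℕ) : ℂ :=
  x ^ p.2.1 * q ^ (p.1 * p.2.1) * qTau q p.2.1 * A (p.1 - p.2.1 - p.2.2) * x ^ p.2.2 /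
    (qPoch q q p.1 * qPoch q q p.2.1 * qPoch x q p.2.1 * qPoch q q p.2.2)

variable {q x : ℂ} {A : ℤ → ℂ}

lemma tsum_seriesTerm (h : Summable (seriesTerm q x A)) :
    ∑' p, seriesTerm q x A p = ∑' p : ℕ × ℕ,
      (x ^ p.2 * q ^ (p.1 * p.2) * qTau q p.2 /
        (qPoch q q p.1 * qPoch q q p.2 * qPoch x q p.2)) *
      ∑' j : ℕ, A ((p.1 : ℤ) - (p.2 : ℤ) - (j : ℤ)) * x ^ j / qPoch q q j := by
  have h_assoc : Summable fun p => seriesTerm q x A (Equiv.prodAssoc ℕ ℕ ℕ p) :=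
    (Equiv.prodAssoc ℕ ℕ ℕ).summable_iff.mpr h
  rw [← (Equiv.prodAssoc ℕ ℕ ℕ).tsum_eq, h_assoc.tsum_prod]
  refine tsum_congr fun p => ?_
  rw [← tsum_mul_left]
  refine tsum_congr fun j => ?_
  rw [div_mul_div_comm]
  simp only [seriesTerm, Equiv.prodAssoc_apply, mul_assoc]

lemma eq_zero_of_summable_seriesTerm (hq : ‖q‖ < 1) (hx : 1 ≤ ‖x‖)
    (h : Summable (seriesTerm q x A)) : A = 0 := by
  funext N
  -- the terms with `k = 0` and `i - j = N` tend to zero, but `‖x ^ j‖ ≥ 1`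
  set index : ℕ → ℕ × ℕ × ℕ := fun n => (n + N.toNat, 0, n + (-N).toNat) with h_index
  have h_inj : Function.Injective index := fun m n hmn => by simpa [h_index] using hmn
  have h_term (n : ℕ) : A N * x ^ (n + (-N).toNat) =
      seriesTerm q x A (index n) * qPoch q q (n + N.toNat) * qPoch q q (n + (-N).toNat) := by
    have hN : ((n + N.toNat : ℕ) : ℤ) - (0 : ℕ) - (n + (-N).toNat : ℕ) = N := by omega
    have hi := qPoch_ne_zero hq hq (n + N.toNat)
    have hj := qPoch_ne_zero hq hq (n + (-N).toNat)
    simp only [seriesTerm, h_index, hN, qTau]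
    simp only [pow_zero, mul_zero, mul_one, zero_tsub, Nat.zero_div, one_mul, qPoch_zero]
    field_simp
  have h_lim : Tendsto (fun n => A N * x ^ (n + (-N).toNat)) atTop (𝓝 0) := by
    have hshift (s : ℕ) := (tendsto_add_atTop_iff_nat s).mpr (tendsto_qPoch hq q)
    simpa only [h_term, Function.comp_apply, zero_mul] using
      ((h.comp_injective h_inj).tendsto_atTop_zero.mul (hshift _)).mul (hshift _)
  have h_le : ‖A N‖ ≤ ‖(0 : ℂ)‖ := by
    refine ge_of_tendsto' h_lim.norm fun n => ?_
    rw [norm_mul, norm_pow]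
    exact le_mul_of_one_le_right (norm_nonneg _) (one_le_pow₀ hx)
  simpa using h_le

lemma hasSum_doubleTerm_zpow (hq0 : q ≠ 0) (hq : ‖q‖ < 1) (hx : ‖x‖ < 1) (N : ℤ) :
    HasSum (doubleTerm q (q ^ N) x fun r => invQPoch q (N + r)) (invQPoch q N) := by
  obtain ⟨C, hC⟩ := exists_norm_invQPoch_le hq
  simpa using hasSum_doubleTerm hq hx (invQPoch_add_natCast hq0 (qPoch_ne_zero hq hq) N)
    fun r => hC (N + r)

lemma qPochInf_mul_seriesTerm (hq0 : q ≠ 0) (hq : ‖q‖ < 1) (hx : ‖x‖ < 1) {N : ℤ} {i k j : ℕ}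
    (hN : N = i - k - j) :
    qPochInf x q * seriesTerm q x A (i, k, j) =
      A N * doubleTerm q (q ^ N) x (fun r => invQPoch q (N + r)) (k, j) := by
  have hi : N + (k + j : ℕ) = i := by omega
  have hpow : q ^ N * x * q ^ (k + j) = x * q ^ i := by
    rw [mul_right_comm, ← zpow_natCast q (k + j), ← zpow_add₀ hq0, hi, zpow_natCast, mul_comm]
  have hxk := qPoch_ne_zero hq hx k
  simp only [doubleTerm, seriesTerm]
  rw [hpow, hi, invQPoch_natCast, ← hN, ← qPoch_mul_qPochInf hq x k, eulerCoeff]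
  field_simp
  ring

lemma hasSum_mul_doubleTerm_zpow (hq0 : q ≠ 0) (hq : ‖q‖ < 1) (hx : ‖x‖ < 1)
    (h : Summable (seriesTerm q x A)) :
    HasSum (fun p : ℤ × ℕ × ℕ =>
        A p.1 * doubleTerm q (q ^ p.1) x (fun r => invQPoch q (p.1 + r)) p.2)
      (qPochInf x q * ∑' p, seriesTerm q x A p) := by
  set reindex : ℕ × ℕ × ℕ → ℤ × ℕ × ℕ := fun p => (p.1 - p.2.1 - p.2.2, p.2) with h_reindex
  have h_inj : Function.Injective reindex := by
    rintro ⟨i, k, j⟩ ⟨i', k', j'⟩ heq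
    simp only [h_reindex, Prod.mk.injEq] at heq ⊢
    omega
  rw [← h_inj.hasSum_iff]
  · exact (h.hasSum.mul_left (qPochInf x q)).congr_fun fun p =>
      (qPochInf_mul_seriesTerm hq0 hq hx rfl).symm
  · rintro ⟨N, k, j⟩ hp
    have hneg : N + (k + j : ℕ) < 0 := by
      by_contra! hnonneg
      refine hp ⟨((N + (k + j : ℕ)).toNat, k, j), ?_⟩
      simp only [h_reindex, Prod.mk.injEq, and_true]
      omega
    simp only [doubleTerm, invQPoch_of_neg q hneg, mul_zero]

lemma hasSum_div_qPoch_of_norm_lt_one (hq0 : q ≠ 0) (hq : ‖q‖ < 1) (hx : ‖x‖ < 1)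
    (h : Summable (seriesTerm q x A)) :
    HasSum (fun n : ℕ => A n / qPoch q q n) (qPochInf x q * ∑' p, seriesTerm q x A p) := by
  have h_int : HasSum (fun N : ℤ => A N * invQPoch q N)
      (qPochInf x q * ∑' p, seriesTerm q x A p) :=
    (hasSum_mul_doubleTerm_zpow hq0 hq hx h).prod_fiberwise fun N =>
      (hasSum_doubleTerm_zpow hq0 hq hx N).mul_left (A N)
  have h_vanish : ∀ N ∉ Set.range ((↑) : ℕ → ℤ), A N * invQPoch q N = 0 := by
    intro N hN
    have hneg : N < 0 := by
      by_contra! hnonneg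
      exact hN ⟨N.toNat, Int.toNat_of_nonneg hnonneg⟩
    rw [invQPoch_of_neg q hneg, mul_zero]
  exact ((Nat.cast_injective.hasSum_iff h_vanish).mpr h_int).congr_fun fun n => div_eq_mul_inv _ _

theorem hasSum_div_qPoch (hq0 : q ≠ 0) (hq : ‖q‖ < 1) (h : Summable (seriesTerm q x A)) :
    HasSum (fun n : ℕ => A n / qPoch q q n) (qPochInf x q * ∑' p, seriesTerm q x A p) := by
  rcases lt_or_ge ‖x‖ 1 with hx | hx
  · exact hasSum_div_qPoch_of_norm_lt_one hq0 hq hx h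
  · obtain rfl := eq_zero_of_summable_seriesTerm hq hx h
    simp [seriesTerm, hasSum_zero]

end Expansion

theorem stmt6 (q : ℂ) (hq0 : 0 < ‖q‖) (hq1 : ‖q‖ < 1)
    (A : ℤ → ℂ) (x : ℂ)
    (hx : ∀ m : ℕ, x ≠ q ^ (-(m : ℤ)))
    (h1 : Summable (fun n : ℕ => ‖A (n : ℤ) / qPoch q q n‖))
    (h2 : Summable (fun p : ℕ × ℕ × ℕ => ‖x ^ p.2.1 * q ^ (p.1 * p.2.1) *
      (-1 : ℂ) ^ p.2.1 * q ^ (p.2.1 * (p.2.1 - 1) / 2) *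
      A ((p.1 : ℤ) - (p.2.1 : ℤ) - (p.2.2 : ℤ)) * x ^ p.2.2 /
      (qPoch q q p.1 * qPoch q q p.2.1 * qPoch x q p.2.1 * qPoch q q p.2.2)‖)) :
    ∑' n : ℕ, A (n : ℤ) / qPoch q q n
    = qPochInf x q * ∑' p : ℕ × ℕ,
        (x ^ p.2 * q ^ (p.1 * p.2) * qTau q p.2 /
          (qPoch q q p.1 * qPoch q q p.2 * qPoch x q p.2)) *
        ∑' j : ℕ, A ((p.1 : ℤ) - (p.2 : ℤ) - (j : ℤ)) * x ^ j / qPoch q q j := by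
  have h : Summable (seriesTerm q x A) :=
    .of_norm (by simpa only [seriesTerm, qTau, ← mul_assoc] using h2)
  rw [← tsum_seriesTerm h]
  exact (hasSum_div_qPoch (norm_pos_iff.mp hq0) hq1 h).tsum_eq
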